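/- arXiv:math/0608678 — 2 statements merged into one kernel-verified Lean document; each statement's English description precedes it below -/
import Mathlib

section
/- For any elements x, y, z of the tensor algebra TV of a Yetter–Drinfeld module, with [x,y] = xy − m∘c⁻¹(x⊗y) and c⁻¹(x⊗y) = Σ ˣy ⊗ xʸ, the following braided Jacobi-type identity holds: [[x,y],z] − [x,[y,z]] = Σ [x, ʸz] yᶻ − Σ ˣy [xʸ, z]. -/
open TensorProduct

noncomputable section

variable {k H : Type*} [Field k] [Ring H] [HopfAlgebra k H]

/-- The inverse braiding `c⁻¹(x ⊗ y) = y₍₀₎ ⊗ S⁻¹(y₍₋₁₎).x` on `T ⊗ T`, built from the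
action `act`, the coaction `coact` and the inverse `Sinv` of the antipode. -/
def cinvMap (Sinv : H →ₗ[k] H) (T : Type*) [Ring T] [Algebra k T]
    (act : H ⊗[k] T →ₗ[k] T) (coact : T →ₗ[k] H ⊗[k] T) :
    T ⊗[k] T →ₗ[k] T ⊗[k] T :=
  (LinearMap.lTensor T act)
    ∘ₗ (LinearMap.lTensor T (LinearMap.rTensor T Sinv))
    ∘ₗ (LinearMap.lTensor T (TensorProduct.comm k T H).toLinearMap)
    ∘ₗ (TensorProduct.comm k (T ⊗[k] H) T).toLinearMap
    ∘ₗ (TensorProduct.assoc k T H T).symm.toLinearMap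
    ∘ₗ (LinearMap.lTensor T coact)

/-- The skew bracket `[x,y] = xy − m∘c⁻¹(x⊗y)` as a linear map `T ⊗ T → T`. -/
def brMap (Sinv : H →ₗ[k] H) (T : Type*) [Ring T] [Algebra k T]
    (act : H ⊗[k] T →ₗ[k] T) (coact : T →ₗ[k] H ⊗[k] T) :
    T ⊗[k] T →ₗ[k] T :=
  LinearMap.mul' k T - LinearMap.mul' k T ∘ₗ cinvMap Sinv T act coact

/-- Left-hand side `h₁x ↦ (h₁.x)₍₋₁₎h₂ ⊗ (h₁.x)₍₀₎` of the Yetter–Drinfeld condition. -/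
def ydL (T : Type*) [Ring T] [Algebra k T]
    (act : H ⊗[k] T →ₗ[k] T) (coact : T →ₗ[k] H ⊗[k] T) :
    H ⊗[k] T →ₗ[k] H ⊗[k] T :=
  (LinearMap.rTensor T (LinearMap.mul' k H))
    ∘ₗ (TensorProduct.assoc k H H T).symm.toLinearMap
    ∘ₗ (LinearMap.lTensor H (TensorProduct.comm k T H).toLinearMap)
    ∘ₗ (TensorProduct.assoc k H T H).toLinearMap
    ∘ₗ (LinearMap.rTensor H (coact ∘ₗ act))
    ∘ₗ (TensorProduct.assoc k H T H).symm.toLinearMap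
    ∘ₗ (LinearMap.lTensor H (TensorProduct.comm k H T).toLinearMap)
    ∘ₗ (TensorProduct.assoc k H H T).toLinearMap
    ∘ₗ (LinearMap.rTensor T (Coalgebra.comul (R := k) (A := H)))

/-- Right-hand side `h⊗x ↦ h₁x₍₋₁₎ ⊗ h₂.x₍₀₎` of the Yetter–Drinfeld condition. -/
def ydR (T : Type*) [Ring T] [Algebra k T]
    (act : H ⊗[k] T →ₗ[k] T) (coact : T →ₗ[k] H ⊗[k] T) :
    H ⊗[k] T →ₗ[k] H ⊗[k] T :=
  (TensorProduct.map (LinearMap.mul' k H) act)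
    ∘ₗ (TensorProduct.tensorTensorTensorComm k H H H T).toLinearMap
    ∘ₗ (LinearMap.lTensor (H ⊗[k] H) coact)
    ∘ₗ (LinearMap.rTensor T (Coalgebra.comul (R := k) (A := H)))

/-!
A linear endomorphism `c` of `T ⊗ T` acts on `T ⊗ T ⊗ T` as `c₁ = c ⊗ id` and as `c₂ = id ⊗ c`.

If `d` satisfies the Yang–Baxter equation `d₁d₂d₁ = d₂d₁d₂` and commutes with the multiplication
`m` of `T`, then with `M = m(m ⊗ id)` the two iterated commutators are `M(1 - d₁d₂)(1 - d₁)` and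
`M(1 - d₂d₁)(1 - d₂)`, and the Jacobi identity is the identity
`(1 - d₁d₂)(1 - d₁) - (1 - d₂d₁)(1 - d₂) = (1 - d₁)d₂ - (1 - d₂)d₁` applied to `M`.

The conditions on `d` are inherited from those on its inverse `c`. For the Yetter–Drinfeld braiding
`c`, the braiding `c_{T,N}` with a module `N` is natural in `N`, and coassociativity gives the
hexagon `c_{T,T ⊗ T} = c₂c₁`. Naturality with respect to the `H`-linear maps `m` and `c` yields
compatibility with `m` in the second factor and the Yang–Baxter equation; compatibility with `m` in
the first factor is the multiplicativity of the coaction.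
-/

section BraidedAlgebra

variable {R T : Type*} [CommSemiring R]

section Module

variable [AddCommMonoid T] [Module R T]

/-- The operator `c₁ = c ⊗ id` on `T ⊗ T ⊗ T`, for an operator `c` on `T ⊗ T`. -/
def onLeft : Module.End R (T ⊗[R] T) →ₐ[R] Module.End R (T ⊗[R] (T ⊗[R] T)) :=
  ((TensorProduct.assoc R T T T).conjAlgEquiv R).toAlgHom.comp (Module.End.rTensorAlgHom R _ T)

/-- The operator `c₂ = id ⊗ c` on `T ⊗ T ⊗ T`, for an operator `c` on `T ⊗ T`. -/
def onRight : Module.End R (T ⊗[R] T) →ₐ[R] Module.End R (T ⊗[R] (T ⊗[R] T)) :=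
  Module.End.lTensorAlgHom R _ T

theorem onLeft_apply (c : Module.End R (T ⊗[R] T)) (u : T ⊗[R] (T ⊗[R] T)) :
    onLeft c u = TensorProduct.assoc R T T T
      (c.rTensor T ((TensorProduct.assoc R T T T).symm u)) :=
  rfl

theorem onRight_apply (c : Module.End R (T ⊗[R] T)) (u : T ⊗[R] (T ⊗[R] T)) :
    onRight c u = c.lTensor T u :=
  rfl

end Module

section Semiring

variable [Semiring T] [Algebra R T]

/-- `(T, c)` is a braided algebra: `c` satisfies the Yang–Baxter equation and commutes with the
multiplication. Invertibility of `c` and compatibility with the unit are not required. -/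
structure IsBraidedAlgebra (c : Module.End R (T ⊗[R] T)) : Prop where
  yangBaxter : onLeft c * onRight c * onLeft c = onRight c * onLeft c * onRight c
  mul_left : c ∘ₗ (LinearMap.mul' R T).rTensor T ∘ₗ (TensorProduct.assoc R T T T).symm.toLinearMap =
    (LinearMap.mul' R T).lTensor T ∘ₗ (onLeft c * onRight c)
  mul_right : c ∘ₗ (LinearMap.mul' R T).lTensor T =
    (LinearMap.mul' R T).rTensor T ∘ₗ (TensorProduct.assoc R T T T).symm.toLinearMap ∘ₗ
      (onRight c * onLeft c)

theorem braid_relation_inv {M : Type*} [Monoid M] {a b : Mˣ}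
    (h : (a * b * a : M) = b * a * b) : (↑a⁻¹ * ↑b⁻¹ * ↑a⁻¹ : M) = ↑b⁻¹ * ↑a⁻¹ * ↑b⁻¹ := by
  have hu : a * b * a = b * a * b := Units.ext h
  simpa [mul_assoc] using congrArg (fun u : Mˣ ↦ (↑u⁻¹ : M)) hu

theorem inv_comp_eq_comp_inv {E F : Type*} [AddCommMonoid E] [Module R E] [AddCommMonoid F]
    [Module R F] {u : (Module.End R E)ˣ} {v : (Module.End R F)ˣ} {f g : F →ₗ[R] E}
    (h : u.val ∘ₗ f = g ∘ₗ v.val) : u⁻¹.val ∘ₗ g = f ∘ₗ v⁻¹.val :=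
  calc u⁻¹.val ∘ₗ g = u⁻¹.val ∘ₗ (g ∘ₗ v.val) ∘ₗ v⁻¹.val :=
        congrArg (fun w ↦ u⁻¹.val ∘ₗ g ∘ₗ w) v.mul_inv.symm
    _ = u⁻¹.val ∘ₗ (u.val ∘ₗ f) ∘ₗ v⁻¹.val := by rw [h]
    _ = f ∘ₗ v⁻¹.val := congrArg (fun w ↦ w ∘ₗ f ∘ₗ v⁻¹.val) u.inv_mul

theorem IsBraidedAlgebra.inv {c : (Module.End R (T ⊗[R] T))ˣ} (hc : IsBraidedAlgebra c.val) :
    IsBraidedAlgebra c⁻¹.val := by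
  let c₁ := Units.map (onLeft (R := R) (T := T)).toRingHom.toMonoidHom c
  let c₂ := Units.map (onRight (R := R) (T := T)).toRingHom.toMonoidHom c
  exact
    { yangBaxter := braid_relation_inv (a := c₁) (b := c₂) hc.yangBaxter
      mul_left := inv_comp_eq_comp_inv (v := c₂ * c₁) hc.mul_right
      mul_right := inv_comp_eq_comp_inv (v := c₁ * c₂) hc.mul_left }

end Semiring

section Ring

variable [Ring T] [Algebra R T]

/-- The braided commutator `m - m ∘ d` on an algebra with multiplication `m`. -/
def braidedCommutator (d : Module.End R (T ⊗[R] T)) : T ⊗[R] T →ₗ[R] T :=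
  LinearMap.mul' R T - LinearMap.mul' R T ∘ₗ d

/-- The multiplication `x ⊗ y ⊗ z ↦ xyz`. -/
def mul₃ : T ⊗[R] (T ⊗[R] T) →ₗ[R] T :=
  LinearMap.mul' R T ∘ₗ (LinearMap.mul' R T).lTensor T

theorem mul'_rTensor_mul' (u : T ⊗[R] (T ⊗[R] T)) :
    LinearMap.mul' R T
      ((LinearMap.mul' R T).rTensor T ((TensorProduct.assoc R T T T).symm u)) = mul₃ u := by
  have : LinearMap.mul' R T ∘ₗ (LinearMap.mul' R T).rTensor T ∘ₗ
      (TensorProduct.assoc R T T T).symm.toLinearMap = mul₃ :=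
    TensorProduct.ext_threefold' fun x y z ↦ by simp [mul₃, mul_assoc]
  exact LinearMap.congr_fun this u

theorem lTensor_braidedCommutator (d : Module.End R (T ⊗[R] T)) (u : T ⊗[R] (T ⊗[R] T)) :
    (braidedCommutator d).lTensor T u = (LinearMap.mul' R T).lTensor T ((1 - onRight d) u) := by
  simp [braidedCommutator, LinearMap.lTensor_sub, LinearMap.lTensor_comp, onRight_apply]

theorem rTensor_braidedCommutator (d : Module.End R (T ⊗[R] T)) (u : T ⊗[R] (T ⊗[R] T)) :
    (braidedCommutator d).rTensor T ((TensorProduct.assoc R T T T).symm u) =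
      (LinearMap.mul' R T).rTensor T
        ((TensorProduct.assoc R T T T).symm ((1 - onLeft d) u)) := by
  simp [braidedCommutator, LinearMap.rTensor_sub, LinearMap.rTensor_comp, onLeft_apply]

namespace IsBraidedAlgebra

variable {d : Module.End R (T ⊗[R] T)}

theorem braidedCommutator_lTensor_mul' (hd : IsBraidedAlgebra d) (u : T ⊗[R] (T ⊗[R] T)) :
    braidedCommutator d ((LinearMap.mul' R T).lTensor T u) =
      mul₃ ((1 - onRight d * onLeft d) u) := by
  have := LinearMap.congr_fun hd.mul_right u
  simp only [LinearMap.comp_apply, LinearEquiv.coe_coe] at this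
  simp [braidedCommutator, this, mul'_rTensor_mul', mul₃]

theorem braidedCommutator_rTensor_mul' (hd : IsBraidedAlgebra d) (u : T ⊗[R] (T ⊗[R] T)) :
    braidedCommutator d
        ((LinearMap.mul' R T).rTensor T ((TensorProduct.assoc R T T T).symm u)) =
      mul₃ ((1 - onLeft d * onRight d) u) := by
  have := LinearMap.congr_fun hd.mul_left u
  simp only [LinearMap.comp_apply, LinearEquiv.coe_coe] at this
  simp [braidedCommutator, this, mul'_rTensor_mul', mul₃]

theorem jacobi (hd : IsBraidedAlgebra d) (x y z : T) :
    braidedCommutator d (braidedCommutator d (x ⊗ₜ y) ⊗ₜ z) -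
        braidedCommutator d (x ⊗ₜ braidedCommutator d (y ⊗ₜ z)) =
      LinearMap.mul' R T ((braidedCommutator d).rTensor T
        ((TensorProduct.assoc R T T T).symm (x ⊗ₜ d (y ⊗ₜ z)))) -
      LinearMap.mul' R T ((braidedCommutator d).lTensor T
        (TensorProduct.assoc R T T T (d (x ⊗ₜ y) ⊗ₜ z))) := by
  let br := braidedCommutator d
  let ξ := x ⊗ₜ[R] (y ⊗ₜ[R] z)
  let a := onLeft d
  let b := onRight d
  calc br (br (x ⊗ₜ y) ⊗ₜ z) - br (x ⊗ₜ br (y ⊗ₜ z))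
      = br (br.rTensor T ((TensorProduct.assoc R T T T).symm ξ)) - br (br.lTensor T ξ) := rfl
    _ = mul₃ (((1 - a * b) * (1 - a) - (1 - b * a) * (1 - b)) ξ) := by
        rw [rTensor_braidedCommutator, hd.braidedCommutator_rTensor_mul',
          lTensor_braidedCommutator, hd.braidedCommutator_lTensor_mul', ← map_sub]
        rfl
    _ = mul₃ (((1 - a) * b - (1 - b) * a) ξ) := by
        have yb : a (b (a ξ)) = b (a (b ξ)) := LinearMap.congr_fun hd.yangBaxter ξ
        simp only [LinearMap.sub_apply, Module.End.mul_apply, Module.End.one_apply, map_sub, yb]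
        abel
    _ = LinearMap.mul' R T (br.rTensor T ((TensorProduct.assoc R T T T).symm (b ξ))) -
          LinearMap.mul' R T (br.lTensor T (a ξ)) := by
        rw [rTensor_braidedCommutator, mul'_rTensor_mul', lTensor_braidedCommutator,
          LinearMap.sub_apply, map_sub]
        rfl

end IsBraidedAlgebra

end Ring

end BraidedAlgebra


section Antipode

open Coalgebra HopfAlgebra

variable {R A : Type*} [CommSemiring R] [Semiring A] [HopfAlgebra R A] {Sinv : A →ₗ[R] A}

theorem antipodeInv_mul_antidistrib (hS1 : ∀ a, Sinv (antipode R a) = a)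
    (hS2 : ∀ a, antipode R (Sinv a) = a) (a b : A) : Sinv (a * b) = Sinv b * Sinv a := by
  rw [← hS1 (Sinv b * Sinv a), antipode_mul_antidistrib, hS2, hS2]

theorem antipodeInv_algebraMap (hS1 : ∀ a, Sinv (antipode R a) = a) (r : R) :
    Sinv (algebraMap R A r) = algebraMap R A r := by
  simpa [Algebra.algebraMap_eq_smul_one] using hS1 (algebraMap R A r)

theorem mul_comm_antipodeInv_lTensor_comul_apply (hS1 : ∀ a, Sinv (antipode R a) = a)
    (hS2 : ∀ a, antipode R (Sinv a) = a) (a : A) :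
    LinearMap.mul' R A (TensorProduct.comm R A A (Sinv.lTensor A (comul a))) =
      algebraMap R A (counit a) := by
  have : LinearMap.mul' R A ∘ₗ (TensorProduct.comm R A A).toLinearMap ∘ₗ Sinv.lTensor A =
      Sinv ∘ₗ LinearMap.mul' R A ∘ₗ (antipode R).rTensor A := by
    ext a b
    simp [antipodeInv_mul_antidistrib hS1 hS2, hS1]
  calc LinearMap.mul' R A (TensorProduct.comm R A A (Sinv.lTensor A (comul a)))
      = Sinv (LinearMap.mul' R A ((antipode R).rTensor A (comul a))) :=
        LinearMap.congr_fun this (comul a)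
    _ = algebraMap R A (counit a) := by
        rw [mul_antipode_rTensor_comul_apply, antipodeInv_algebraMap hS1]

theorem mul_comm_antipodeInv_rTensor_comul_apply (hS1 : ∀ a, Sinv (antipode R a) = a)
    (hS2 : ∀ a, antipode R (Sinv a) = a) (a : A) :
    LinearMap.mul' R A (TensorProduct.comm R A A (Sinv.rTensor A (comul a))) =
      algebraMap R A (counit a) := by
  have : LinearMap.mul' R A ∘ₗ (TensorProduct.comm R A A).toLinearMap ∘ₗ Sinv.rTensor A =
      Sinv ∘ₗ LinearMap.mul' R A ∘ₗ (antipode R).lTensor A := by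
    ext a b
    simp [antipodeInv_mul_antidistrib hS1 hS2, hS1]
  calc LinearMap.mul' R A (TensorProduct.comm R A A (Sinv.rTensor A (comul a)))
      = Sinv (LinearMap.mul' R A ((antipode R).lTensor A (comul a))) :=
        LinearMap.congr_fun this (comul a)
    _ = algebraMap R A (counit a) := by
        rw [mul_antipode_lTensor_comul_apply, antipodeInv_algebraMap hS1]

end Antipode

section YetterDrinfeldBraiding

open Coalgebra

section Coalgebra

variable {R C M N P : Type*} [CommSemiring R] [AddCommMonoid C] [Module R C]
  [AddCommMonoid M] [Module R M] [AddCommMonoid N] [Module R N] [AddCommMonoid P] [Module R P]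

/-- The orbit map `h ↦ h.y` of an element under the action `h ⊗ y ↦ h.y`. -/
def orbitMap (act : C ⊗[R] N →ₗ[R] N) (y : N) : C →ₗ[R] N :=
  (TensorProduct.curry act).flip y

@[simp]
theorem orbitMap_apply (act : C ⊗[R] N →ₗ[R] N) (y : N) (h : C) :
    orbitMap act y h = act (h ⊗ₜ y) :=
  rfl

/-- The Yetter–Drinfeld braiding `x ⊗ y ↦ x₍₋₁₎.y ⊗ x₍₀₎`, for a coaction on the first factor and
an action on the second. -/
def braiding (act : C ⊗[R] N →ₗ[R] N) (coact : M →ₗ[R] C ⊗[R] M) : M ⊗[R] N →ₗ[R] N ⊗[R] M :=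
  TensorProduct.lift ((LinearMap.rTensorHom M ∘ₗ (TensorProduct.curry act).flip).flip ∘ₗ coact)

theorem braiding_tmul (act : C ⊗[R] N →ₗ[R] N) (coact : M →ₗ[R] C ⊗[R] M) (x : M) (y : N) :
    braiding act coact (x ⊗ₜ y) = (orbitMap act y).rTensor M (coact x) :=
  rfl

theorem rTensor_comp_braiding {actN : C ⊗[R] N →ₗ[R] N} {actP : C ⊗[R] P →ₗ[R] P} {f : N →ₗ[R] P}
    (hf : f ∘ₗ actN = actP ∘ₗ f.lTensor C) (coact : M →ₗ[R] C ⊗[R] M) :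
    f.rTensor M ∘ₗ braiding actN coact = braiding actP coact ∘ₗ f.lTensor M := by
  refine TensorProduct.ext' fun x y ↦ ?_
  have : f ∘ₗ orbitMap actN y = orbitMap actP (f y) :=
    LinearMap.ext fun h ↦ LinearMap.congr_fun hf (h ⊗ₜ y)
  simp only [LinearMap.comp_apply, LinearMap.lTensor_tmul, braiding_tmul, ← this,
    LinearMap.rTensor_comp]

variable [Coalgebra R C]

/-- The diagonal action `h.(x ⊗ y) = h₍₁₎.x ⊗ h₍₂₎.y`. -/
def diagonalAct (actN : C ⊗[R] N →ₗ[R] N) (actP : C ⊗[R] P →ₗ[R] P) :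
    C ⊗[R] (N ⊗[R] P) →ₗ[R] N ⊗[R] P :=
  TensorProduct.map actN actP ∘ₗ
    (TensorProduct.tensorTensorTensorComm R C C N P).toLinearMap ∘ₗ
    (comul (R := R) (A := C)).rTensor (N ⊗[R] P)

theorem orbitMap_diagonalAct (actN : C ⊗[R] N →ₗ[R] N) (actP : C ⊗[R] P →ₗ[R] P) (y : N) (z : P) :
    orbitMap (diagonalAct actN actP) (y ⊗ₜ z) =
      TensorProduct.map (orbitMap actN y) (orbitMap actP z) ∘ₗ comul := by
  have : TensorProduct.map actN actP ∘ₗ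
      (TensorProduct.tensorTensorTensorComm R C C N P).toLinearMap ∘ₗ
      (TensorProduct.mk R (C ⊗[R] C) (N ⊗[R] P)).flip (y ⊗ₜ z) =
        TensorProduct.map (orbitMap actN y) (orbitMap actP z) := by
    ext a b
    simp
  rw [← this]
  rfl

theorem braiding_diagonalAct (actN : C ⊗[R] N →ₗ[R] N) (actP : C ⊗[R] P →ₗ[R] P)
    {coact : M →ₗ[R] C ⊗[R] M}
    (hcoassoc : ∀ x, TensorProduct.assoc R C C M ((comul (R := R)).rTensor M (coact x)) =
      coact.lTensor C (coact x)) :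
    braiding (diagonalAct actN actP) coact =
      (TensorProduct.assoc R N P M).symm.toLinearMap ∘ₗ (braiding actP coact).lTensor N ∘ₗ
        (TensorProduct.assoc R N M P).toLinearMap ∘ₗ (braiding actN coact).rTensor P ∘ₗ
        (TensorProduct.assoc R M N P).symm.toLinearMap := by
  refine TensorProduct.ext_threefold' fun x y z ↦ ?_
  have act_left : (braiding actP coact).lTensor N ∘ₗ
        (TensorProduct.assoc R N M P).toLinearMap ∘ₗ
        (TensorProduct.mk R (N ⊗[R] M) P).flip z ∘ₗ (orbitMap actN y).rTensor M =
      TensorProduct.map (orbitMap actN y) ((orbitMap actP z).rTensor M) ∘ₗ coact.lTensor C := by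
    ext a m
    simp [braiding_tmul]
  let g := TensorProduct.map (orbitMap actN y) ((orbitMap actP z).rTensor M)
  calc braiding (diagonalAct actN actP) coact (x ⊗ₜ (y ⊗ₜ z))
      = (TensorProduct.map (orbitMap actN y) (orbitMap actP z)).rTensor M
          ((comul (R := R)).rTensor M (coact x)) := by
        rw [braiding_tmul, orbitMap_diagonalAct, LinearMap.rTensor_comp_apply]
    _ = (TensorProduct.assoc R N P M).symm (g (coact.lTensor C (coact x))) := by
        rw [← hcoassoc, LinearEquiv.eq_symm_apply]
        exact (TensorProduct.map_map_assoc _ _ _ _).symm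
    _ = _ := congrArg (TensorProduct.assoc R N P M).symm
        (LinearMap.congr_fun act_left (coact x)).symm

theorem rTensor_assoc_symm_lTensor_coact {coact : M →ₗ[R] C ⊗[R] M}
    (hcounit : ∀ x, TensorProduct.lid R M ((counit (R := R)).rTensor M (coact x)) = x)
    (hcoassoc : ∀ x, TensorProduct.assoc R C C M ((comul (R := R)).rTensor M (coact x)) =
      coact.lTensor C (coact x))
    {f : C ⊗[R] C →ₗ[R] N} {y : N} (hf : ∀ h, f (comul h) = counit (R := R) h • y) (x : M) :
    f.rTensor M ((TensorProduct.assoc R C C M).symm (coact.lTensor C (coact x))) = y ⊗ₜ x := by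
  have hcomp : f ∘ₗ comul = LinearMap.toSpanSingleton R N y ∘ₗ counit := LinearMap.ext hf
  have hspan : (LinearMap.toSpanSingleton R N y).rTensor M =
      TensorProduct.mk R N M y ∘ₗ (TensorProduct.lid R M).toLinearMap := by
    ext m
    simp
  calc f.rTensor M ((TensorProduct.assoc R C C M).symm (coact.lTensor C (coact x)))
      = (f ∘ₗ comul).rTensor M (coact x) := by
        rw [← hcoassoc, LinearEquiv.symm_apply_apply, LinearMap.rTensor_comp_apply]
    _ = y ⊗ₜ TensorProduct.lid R M ((counit (R := R)).rTensor M (coact x)) := by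
        rw [hcomp, LinearMap.rTensor_comp_apply, hspan]
        rfl
    _ = y ⊗ₜ x := by rw [hcounit]

end Coalgebra

section Algebra

variable {R A T N : Type*} [CommSemiring R] [Semiring A] [Algebra R A] [Semiring T] [Algebra R T]
  [AddCommMonoid N] [Module R N]

theorem braiding_comp_rTensor_mul' {act : A ⊗[R] N →ₗ[R] N}
    (hactm : ∀ (g h : A) (x : N), act ((g * h) ⊗ₜ x) = act (g ⊗ₜ act (h ⊗ₜ x)))
    {coact : T →ₗ[R] A ⊗[R] T} (hcoact : ∀ x y, coact (x * y) = coact x * coact y) :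
    braiding act coact ∘ₗ (LinearMap.mul' R T).rTensor N ∘ₗ
        (TensorProduct.assoc R T T N).symm.toLinearMap =
      (LinearMap.mul' R T).lTensor N ∘ₗ (TensorProduct.assoc R N T T).toLinearMap ∘ₗ
        (braiding act coact).rTensor T ∘ₗ (TensorProduct.assoc R T N T).symm.toLinearMap ∘ₗ
        (braiding act coact).lTensor T := by
  refine TensorProduct.ext_threefold' fun x y z ↦ ?_
  simp only [LinearMap.comp_apply, LinearMap.rTensor_tmul, LinearMap.lTensor_tmul,
    LinearMap.mul'_apply, LinearEquiv.coe_coe, TensorProduct.assoc_symm_tmul, braiding_tmul, hcoact]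
  induction coact y with
  | zero => simp
  | add u v hu hv => simp only [map_add, TensorProduct.tmul_add, mul_add, hu, hv]
  | tmul h t =>
    simp only [LinearMap.rTensor_tmul, TensorProduct.assoc_symm_tmul, braiding_tmul]
    induction coact x with
    | zero => simp
    | add u v hu hv => simp only [map_add, TensorProduct.add_tmul, add_mul, hu, hv]
    | tmul g s => simp [hactm]

end Algebra

section HopfAlgebra

variable {T : Type*} [Ring T] [Algebra k T]

theorem cinvMap_tmul (Sinv : H →ₗ[k] H) (act : H ⊗[k] T →ₗ[k] T) (coact : T →ₗ[k] H ⊗[k] T)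
    (x y : T) : cinvMap Sinv T act coact (x ⊗ₜ y) =
      TensorProduct.comm k T T ((orbitMap act x ∘ₗ Sinv).rTensor T (coact y)) := by
  simp only [cinvMap, LinearMap.comp_apply, LinearMap.lTensor_tmul]
  induction coact y with
  | zero => simp
  | add u v hu hv => simp only [map_add, TensorProduct.tmul_add, hu, hv]
  | tmul h t => simp

theorem cinvMap_comp_braiding {Sinv : H →ₗ[k] H}
    (hS1 : ∀ h, Sinv (HopfAlgebra.antipode k h) = h)
    (hS2 : ∀ h, HopfAlgebra.antipode k (Sinv h) = h)
    {act : H ⊗[k] T →ₗ[k] T} (hact1 : ∀ x, act ((1 : H) ⊗ₜ x) = x)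
    (hactm : ∀ (g h : H) (x : T), act ((g * h) ⊗ₜ x) = act (g ⊗ₜ act (h ⊗ₜ x)))
    {coact : T →ₗ[k] H ⊗[k] T}
    (hcounit : ∀ x, TensorProduct.lid k T ((counit (R := k)).rTensor T (coact x)) = x)
    (hcoassoc : ∀ x, TensorProduct.assoc k H H T ((comul (R := k)).rTensor T (coact x)) =
      coact.lTensor H (coact x)) :
    cinvMap Sinv T act coact ∘ₗ braiding act coact = LinearMap.id := by
  refine TensorProduct.ext' fun x y ↦ ?_
  let f : H ⊗[k] H →ₗ[k] T := orbitMap act y ∘ₗ LinearMap.mul' k H ∘ₗ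
    (TensorProduct.comm k H H).toLinearMap ∘ₗ Sinv.lTensor H
  have hf (h : H) : f (comul h) = counit (R := k) h • y := by
    simp only [f, LinearMap.comp_apply, LinearEquiv.coe_coe,
      mul_comm_antipodeInv_lTensor_comul_apply hS1 hS2, orbitMap_apply,
      Algebra.algebraMap_eq_smul_one, map_smul, hact1]
  have hcomp : cinvMap Sinv T act coact ∘ₗ (orbitMap act y).rTensor T =
      (TensorProduct.comm k T T).toLinearMap ∘ₗ f.rTensor T ∘ₗ
        (TensorProduct.assoc k H H T).symm.toLinearMap ∘ₗ coact.lTensor H := by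
    refine TensorProduct.ext' fun h t ↦ ?_
    simp only [LinearMap.comp_apply, LinearMap.rTensor_tmul, LinearMap.lTensor_tmul, cinvMap_tmul,
      LinearEquiv.coe_coe]
    induction coact t with
    | zero => simp
    | add u v hu hv => simp only [map_add, TensorProduct.tmul_add, hu, hv]
    | tmul g s => simp [f, hactm]
  calc cinvMap Sinv T act coact (braiding act coact (x ⊗ₜ y))
      = TensorProduct.comm k T T (f.rTensor T
          ((TensorProduct.assoc k H H T).symm (coact.lTensor H (coact x)))) :=
        LinearMap.congr_fun hcomp (coact x)
    _ = x ⊗ₜ y := by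
        rw [rTensor_assoc_symm_lTensor_coact hcounit hcoassoc hf, TensorProduct.comm_tmul]

theorem braiding_comp_cinvMap {Sinv : H →ₗ[k] H}
    (hS1 : ∀ h, Sinv (HopfAlgebra.antipode k h) = h)
    (hS2 : ∀ h, HopfAlgebra.antipode k (Sinv h) = h)
    {act : H ⊗[k] T →ₗ[k] T} (hact1 : ∀ x, act ((1 : H) ⊗ₜ x) = x)
    (hactm : ∀ (g h : H) (x : T), act ((g * h) ⊗ₜ x) = act (g ⊗ₜ act (h ⊗ₜ x)))
    {coact : T →ₗ[k] H ⊗[k] T}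
    (hcounit : ∀ x, TensorProduct.lid k T ((counit (R := k)).rTensor T (coact x)) = x)
    (hcoassoc : ∀ x, TensorProduct.assoc k H H T ((comul (R := k)).rTensor T (coact x)) =
      coact.lTensor H (coact x)) :
    braiding act coact ∘ₗ cinvMap Sinv T act coact = LinearMap.id := by
  refine TensorProduct.ext' fun x y ↦ ?_
  let f : H ⊗[k] H →ₗ[k] T := orbitMap act x ∘ₗ LinearMap.mul' k H ∘ₗ
    (TensorProduct.comm k H H).toLinearMap ∘ₗ Sinv.rTensor H
  have hf (h : H) : f (comul h) = counit (R := k) h • x := by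
    simp only [f, LinearMap.comp_apply, LinearEquiv.coe_coe,
      mul_comm_antipodeInv_rTensor_comul_apply hS1 hS2, orbitMap_apply,
      Algebra.algebraMap_eq_smul_one, map_smul, hact1]
  have hcomp : braiding act coact ∘ₗ (TensorProduct.comm k T T).toLinearMap ∘ₗ
        (orbitMap act x ∘ₗ Sinv).rTensor T =
      f.rTensor T ∘ₗ (TensorProduct.assoc k H H T).symm.toLinearMap ∘ₗ coact.lTensor H := by
    refine TensorProduct.ext' fun h t ↦ ?_
    simp only [LinearMap.comp_apply, LinearMap.rTensor_tmul, LinearMap.lTensor_tmul,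
      braiding_tmul, LinearEquiv.coe_coe, TensorProduct.comm_tmul]
    induction coact t with
    | zero => simp
    | add u v hu hv => simp only [map_add, TensorProduct.tmul_add, hu, hv]
    | tmul g s => simp [f, hactm]
  calc braiding act coact (cinvMap Sinv T act coact (x ⊗ₜ y))
      = f.rTensor T ((TensorProduct.assoc k H H T).symm (coact.lTensor H (coact y))) := by
        rw [cinvMap_tmul]
        exact LinearMap.congr_fun hcomp (coact y)
    _ = x ⊗ₜ y := rTensor_assoc_symm_lTensor_coact hcounit hcoassoc hf y

section Linearity

variable {N : Type*} [AddCommMonoid N] [Module k N] {act : H ⊗[k] T →ₗ[k] T}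
  {actN : H ⊗[k] N →ₗ[k] N} {coact : T →ₗ[k] H ⊗[k] T}

theorem rTensor_orbitMap_ydL
    (hactm : ∀ (g h : H) (x : N), actN ((g * h) ⊗ₜ x) = actN (g ⊗ₜ actN (h ⊗ₜ x)))
    (h : H) (y : T) (z : N) :
    (orbitMap actN z).rTensor T (ydL T act coact (h ⊗ₜ y)) =
      braiding actN coact (diagonalAct act actN (h ⊗ₜ (y ⊗ₜ z))) := by
  simp only [ydL, diagonalAct, LinearMap.comp_apply, LinearMap.rTensor_tmul, LinearEquiv.coe_coe]
  induction comul (R := k) h with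
  | zero => simp
  | add u v hu hv => simp only [map_add, TensorProduct.add_tmul, hu, hv]
  | tmul a b =>
    simp only [TensorProduct.assoc_tmul, LinearMap.lTensor_tmul, LinearEquiv.coe_coe,
      TensorProduct.comm_tmul, TensorProduct.assoc_symm_tmul, LinearMap.rTensor_tmul,
      LinearMap.comp_apply, TensorProduct.tensorTensorTensorComm_tmul, TensorProduct.map_tmul,
      braiding_tmul]
    induction coact (act (a ⊗ₜ y)) with
    | zero => simp
    | add u v hu hv => simp only [map_add, TensorProduct.add_tmul, hu, hv]
    | tmul g t => simp [hactm]

theorem rTensor_orbitMap_ydR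
    (hactm : ∀ (g h : H) (x : N), actN ((g * h) ⊗ₜ x) = actN (g ⊗ₜ actN (h ⊗ₜ x)))
    (h : H) (y : T) (z : N) :
    (orbitMap actN z).rTensor T (ydR T act coact (h ⊗ₜ y)) =
      diagonalAct actN act (h ⊗ₜ braiding actN coact (y ⊗ₜ z)) := by
  simp only [ydR, diagonalAct, LinearMap.comp_apply, LinearMap.rTensor_tmul, LinearEquiv.coe_coe,
    LinearMap.lTensor_tmul, braiding_tmul]
  induction comul (R := k) h with
  | zero => simp
  | add u v hu hv => simp only [map_add, TensorProduct.add_tmul, hu, hv]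
  | tmul a b =>
    induction coact y with
    | zero => simp
    | add u v hu hv => simp only [map_add, TensorProduct.tmul_add, hu, hv]
    | tmul g t => simp [hactm]

theorem braiding_comp_diagonalAct
    (hactm : ∀ (g h : H) (x : N), actN ((g * h) ⊗ₜ x) = actN (g ⊗ₜ actN (h ⊗ₜ x)))
    (hYD : ydL T act coact = ydR T act coact) :
    braiding actN coact ∘ₗ diagonalAct act actN =
      diagonalAct actN act ∘ₗ (braiding actN coact).lTensor H :=
  TensorProduct.ext_threefold' fun h y z ↦
    calc braiding actN coact (diagonalAct act actN (h ⊗ₜ (y ⊗ₜ z)))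
        = (orbitMap actN z).rTensor T (ydL T act coact (h ⊗ₜ y)) :=
          (rTensor_orbitMap_ydL hactm h y z).symm
      _ = (orbitMap actN z).rTensor T (ydR T act coact (h ⊗ₜ y)) := by rw [hYD]
      _ = diagonalAct actN act (h ⊗ₜ braiding actN coact (y ⊗ₜ z)) :=
          rTensor_orbitMap_ydR hactm h y z

end Linearity

theorem isBraidedAlgebra_braiding {act : H ⊗[k] T →ₗ[k] T} {coact : T →ₗ[k] H ⊗[k] T}
    (hactm : ∀ (g h : H) (x : T), act ((g * h) ⊗ₜ x) = act (g ⊗ₜ act (h ⊗ₜ x)))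
    (hma : act ∘ₗ (LinearMap.mul' k T).lTensor H = LinearMap.mul' k T ∘ₗ diagonalAct act act)
    (hcoact : ∀ x y, coact (x * y) = coact x * coact y)
    (hcoassoc : ∀ x, TensorProduct.assoc k H H T ((comul (R := k)).rTensor T (coact x)) =
      coact.lTensor H (coact x))
    (hYD : ydL T act coact = ydR T act coact) :
    IsBraidedAlgebra (braiding act coact) := by
  let c : Module.End k (T ⊗[k] T) := braiding act coact
  have hexagon : braiding (diagonalAct act act) coact =
      (TensorProduct.assoc k T T T).symm.toLinearMap ∘ₗ (onRight c * onLeft c) :=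
    braiding_diagonalAct act act hcoassoc
  have naturality_c : c.rTensor T ∘ₗ braiding (diagonalAct act act) coact =
      braiding (diagonalAct act act) coact ∘ₗ c.lTensor T :=
    rTensor_comp_braiding (braiding_comp_diagonalAct hactm hYD) coact
  refine ⟨?_, braiding_comp_rTensor_mul' hactm hcoact, ?_⟩
  · rw [hexagon] at naturality_c
    refine LinearMap.ext fun u ↦ ?_
    have := congrArg (TensorProduct.assoc k T T T) (LinearMap.congr_fun naturality_c u)
    simp only [LinearMap.comp_apply, LinearEquiv.coe_coe, LinearEquiv.apply_symm_apply] at this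
    exact this
  · rw [← rTensor_comp_braiding hma.symm coact, hexagon]

end HopfAlgebra

end YetterDrinfeldBraiding

theorem braided_jacobi_identity_general {T : Type*} [Ring T] [Algebra k T] {Sinv : H →ₗ[k] H}
    (hS1 : ∀ h, Sinv (HopfAlgebra.antipode k h) = h)
    (hS2 : ∀ h, HopfAlgebra.antipode k (Sinv h) = h)
    {act : H ⊗[k] T →ₗ[k] T} (hact1 : ∀ x, act ((1 : H) ⊗ₜ x) = x)
    (hactm : ∀ (g h : H) (x : T), act ((g * h) ⊗ₜ x) = act (g ⊗ₜ act (h ⊗ₜ x)))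
    (hma : act ∘ₗ (LinearMap.mul' k T).lTensor H = LinearMap.mul' k T ∘ₗ diagonalAct act act)
    {coact : T →ₗ[k] H ⊗[k] T} (hcoact : ∀ x y, coact (x * y) = coact x * coact y)
    (hcounit : ∀ x, TensorProduct.lid k T ((Coalgebra.counit (R := k)).rTensor T (coact x)) = x)
    (hcoassoc : ∀ x, TensorProduct.assoc k H H T
      ((Coalgebra.comul (R := k)).rTensor T (coact x)) = coact.lTensor H (coact x))
    (hYD : ydL T act coact = ydR T act coact) (x y z : T) :
    brMap Sinv T act coact (brMap Sinv T act coact (x ⊗ₜ y) ⊗ₜ z) -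
        brMap Sinv T act coact (x ⊗ₜ brMap Sinv T act coact (y ⊗ₜ z)) =
      LinearMap.mul' k T ((brMap Sinv T act coact).rTensor T
        ((TensorProduct.assoc k T T T).symm (x ⊗ₜ cinvMap Sinv T act coact (y ⊗ₜ z)))) -
      LinearMap.mul' k T ((brMap Sinv T act coact).lTensor T
        (TensorProduct.assoc k T T T (cinvMap Sinv T act coact (x ⊗ₜ y) ⊗ₜ z))) := by
  let c : (Module.End k (T ⊗[k] T))ˣ :=
    { val := braiding act coact
      inv := cinvMap Sinv T act coact
      val_inv := braiding_comp_cinvMap hS1 hS2 hact1 hactm hcounit hcoassoc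
      inv_val := cinvMap_comp_braiding hS1 hS2 hact1 hactm hcounit hcoassoc }
  have hc : IsBraidedAlgebra c.val := isBraidedAlgebra_braiding hactm hma hcoact hcoassoc hYD
  exact hc.inv.jacobi x y z

/-- In the setting of a Yetter–Drinfeld module over a Hopf algebra `H` with
bijective antipode, with `[x,y] = xy − m∘c⁻¹(x⊗y)` and `c⁻¹(x⊗y) = Σ ˣy ⊗ xʸ`, the braided
Jacobi-type identity holds:
`[[x,y],z] − [x,[y,z]] = Σ [x, ʸz] yᶻ − Σ ˣy [xʸ, z]`. -/
theorem braided_jacobi_identity {V : Type*} [AddCommGroup V] [Module k V]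
    (Sinv : H →ₗ[k] H)
    (hS1 : ∀ h, Sinv (HopfAlgebra.antipode (R := k) h) = h)
    (hS2 : ∀ h, HopfAlgebra.antipode (R := k) (Sinv h) = h)
    (act : H ⊗[k] TensorAlgebra k V →ₗ[k] TensorAlgebra k V)
    (hact1 : ∀ x, act ((1 : H) ⊗ₜ x) = x)
    (hactm : ∀ (g h : H) (x : TensorAlgebra k V),
      act ((g * h) ⊗ₜ x) = act (g ⊗ₜ act (h ⊗ₜ x)))
    -- `act` is a module-algebra action:
    (hma : act ∘ₗ LinearMap.lTensor H (LinearMap.mul' k (TensorAlgebra k V)) =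
      LinearMap.mul' k (TensorAlgebra k V) ∘ₗ TensorProduct.map act act
        ∘ₗ (TensorProduct.tensorTensorTensorComm k H H
            (TensorAlgebra k V) (TensorAlgebra k V)).toLinearMap
        ∘ₗ LinearMap.rTensor (TensorAlgebra k V ⊗[k] TensorAlgebra k V)
            (Coalgebra.comul (R := k) (A := H)))
    (hmau : ∀ h : H, act (h ⊗ₜ 1) = (Coalgebra.counit (R := k) (A := H) h) • 1)
    -- `coact` is a comodule-algebra coaction:
    (coact : TensorAlgebra k V →ₐ[k] H ⊗[k] TensorAlgebra k V)
    (hcounit : ∀ x, (TensorProduct.lid k (TensorAlgebra k V))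
      ((LinearMap.rTensor (TensorAlgebra k V) (Coalgebra.counit (R := k) (A := H)))
        (coact x)) = x)
    (hcoassoc : ∀ x, (TensorProduct.assoc k H H (TensorAlgebra k V))
        ((LinearMap.rTensor (TensorAlgebra k V) (Coalgebra.comul (R := k) (A := H)))
          (coact x)) =
      (LinearMap.lTensor H coact.toLinearMap) (coact x))
    -- the Yetter–Drinfeld compatibility condition:
    (hYD : ydL (TensorAlgebra k V) act coact.toLinearMap =
      ydR (TensorAlgebra k V) act coact.toLinearMap)
    (x y z : TensorAlgebra k V) :
    brMap Sinv (TensorAlgebra k V) act coact.toLinearMap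
        ((brMap Sinv (TensorAlgebra k V) act coact.toLinearMap (x ⊗ₜ y)) ⊗ₜ z) -
      brMap Sinv (TensorAlgebra k V) act coact.toLinearMap
        (x ⊗ₜ (brMap Sinv (TensorAlgebra k V) act coact.toLinearMap (y ⊗ₜ z))) =
    LinearMap.mul' k (TensorAlgebra k V)
      ((LinearMap.rTensor (TensorAlgebra k V)
          (brMap Sinv (TensorAlgebra k V) act coact.toLinearMap))
        ((TensorProduct.assoc k (TensorAlgebra k V) (TensorAlgebra k V)
            (TensorAlgebra k V)).symm
          (x ⊗ₜ (cinvMap Sinv (TensorAlgebra k V) act coact.toLinearMap (y ⊗ₜ z))))) -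
    LinearMap.mul' k (TensorAlgebra k V)
      ((LinearMap.lTensor (TensorAlgebra k V)
          (brMap Sinv (TensorAlgebra k V) act coact.toLinearMap))
        ((TensorProduct.assoc k (TensorAlgebra k V) (TensorAlgebra k V) (TensorAlgebra k V))
          ((cinvMap Sinv (TensorAlgebra k V) act coact.toLinearMap (x ⊗ₜ y)) ⊗ₜ z))) := by
  exact braided_jacobi_identity_general hS1 hS2 hact1 hactm hma (map_mul coact) hcounit hcoassoc hYD
    x y z
end
end

section
/- For any word u over A and any u-vector x, the difference x − [x] is a linear combination of w-bracket-words with w a monotonic super-word satisfying w > u (as words, lexicographically). -/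
open TensorProduct

/-- A nonempty word `u` over a totally ordered alphabet is a Lyndon word if for every
factorization `u = u₁ ++ u₂` into nonempty words one has `u < u₂` lexicographically. -/
def IsLyndon {α : Type*} [LinearOrder α] (u : List α) : Prop :=
  u ≠ [] ∧ ∀ u₁ u₂ : List α, u₁ ≠ [] → u₂ ≠ [] → u = u₁ ++ u₂ → u < u₂

/-- `ShirshovDecomp u v w` means `u = v ++ w` where `w` is the longest proper right factor of
`u` which is a Lyndon word (and `v` is nonempty). -/
def ShirshovDecomp {α : Type*} [LinearOrder α] (u v w : List α) : Prop :=
  u = v ++ w ∧ v ≠ [] ∧ w ≠ [] ∧ IsLyndon w ∧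
    ∀ w' : List α, w' <:+ u → w' ≠ u → IsLyndon w' → w'.length ≤ w.length

/-- For a word `u = a₁⋯aₘ` over the alphabet `ι`, the space of `u`-vectors
`V^u = V_{a₁}·V_{a₂}⋯V_{aₘ} ⊆ T` (the canonical image of `V_{a₁}⊗⋯⊗V_{aₘ}`). -/
def Vword {k T ι : Type*} [CommSemiring k] [Semiring T] [Algebra k T]
    (V : ι → Submodule k T) (u : List ι) : Submodule k T :=
  (u.map V).prod

section Bracket

variable {k T ι : Type*} [Field k] [Ring T] [Algebra k T] [LinearOrder ι]

/-- `IsBracketing V cinv Br` says that the family of linear maps `Br u` is the iterated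
bracketing `[·]` of `u`-vectors with respect to the inverse braiding `cinv`:
it is the identity on letters, it is given by the skew bracket
`[x,y] = xy − m∘c⁻¹(x⊗y)` of the two parts of the Shirshov decomposition on Lyndon words,
and it is multiplicative along the monotonic (Chen–Fox–Lyndon) factorization, whose first
factor is the longest Lyndon prefix. -/
def IsBracketing (V : ι → Submodule k T) (cinv : T ⊗[k] T →ₗ[k] T ⊗[k] T)
    (Br : List ι → T →ₗ[k] T) : Prop :=
  (∀ x ∈ (1 : Submodule k T), Br [] x = x) ∧
  (∀ a : ι, ∀ x ∈ V a, Br [a] x = x) ∧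
  (∀ u v w : List ι, IsLyndon u → ShirshovDecomp u v w →
    ∀ x ∈ Vword V v, ∀ y ∈ Vword V w,
      Br u (x * y) =
        (LinearMap.mul' k T - LinearMap.mul' k T ∘ₗ cinv) ((Br v x) ⊗ₜ (Br w y))) ∧
  (∀ u v w : List ι, u = v ++ w → IsLyndon v → w ≠ [] →
    (∀ v' : List ι, v' <+: u → IsLyndon v' → v'.length ≤ v.length) →
    ∀ x ∈ Vword V v, ∀ y ∈ Vword V w, Br u (x * y) = Br v x * Br w y)

/-- The key property of the inverse braiding on `TV` induced by the Yetter–Drinfeld structure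
of `V = ⊕ᵢ Vᵢ`: it maps `V^u ⊗ V^v` into `V^v ⊗ V^u`. -/
def BraidingCompat (V : ι → Submodule k T) (cinv : T ⊗[k] T →ₗ[k] T ⊗[k] T) : Prop :=
  ∀ u v : List ι, ∀ x,
    x ∈ LinearMap.range (TensorProduct.map (Vword V u).subtype (Vword V v).subtype) →
      cinv x ∈ LinearMap.range (TensorProduct.map (Vword V v).subtype (Vword V u).subtype)

end Bracket

/-! The bracket is unitriangular on rearrangements of a word. For `u = v ++ w` Lyndon with `w` its
longest proper Lyndon right factor, `[x y]` has leading product `[x] [y]`, and the braided term of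
the skew bracket lies in the sum of the spaces `V^(w' ++ v')` with `v'` and `w'` rearrangements of
`v` and `w` and `w' ≥ w`; here `w' ++ v' > u` because `w > u`. Hence `x - [x]` is a sum of
`z`-vectors over rearrangements `z > u`. As a word has only finitely many rearrangements,
unitriangularity can be inverted, replacing these `z`-vectors by `z`-bracket-words. -/

section UnitriangularFamily

variable {κ R M : Type*} [Ring R] [AddCommGroup M] [Module R M]

theorem sub_apply_mem_iSup_map_of_wellFounded {S : κ → Set κ}
    (hS : WellFounded fun j i => j ∈ S i) (hS_trans : ∀ i, ∀ j ∈ S i, S j ⊆ S i)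
    {p : κ → Submodule R M} {f : κ → M →ₗ[R] M}
    (hf : ∀ i, ∀ x ∈ p i, x - f i x ∈ ⨆ j ∈ S i, p j) (i : κ) {x : M} (hx : x ∈ p i) :
    x - f i x ∈ ⨆ j ∈ S i, (p j).map (f j) := by
  induction i using hS.induction generalizing x with
  | _ i ih =>
    suffices h : ∀ j ∈ S i, p j ≤ ⨆ j ∈ S i, (p j).map (f j) from iSup₂_le h (hf i x hx)
    intro j hj y hy
    have h_sub : y - f j y ∈ ⨆ j ∈ S i, (p j).map (f j) :=
      biSup_mono (f := fun j => (p j).map (f j)) (hS_trans i j hj) (ih j hj hy)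
    have h_apply : f j y ∈ ⨆ j ∈ S i, (p j).map (f j) :=
      le_biSup (fun j => (p j).map (f j)) hj (Submodule.mem_map_of_mem hy)
    simpa only [sub_add_cancel] using add_mem h_sub h_apply

end UnitriangularFamily

section LyndonFactor

variable {α : Type*} [LinearOrder α]

theorem isLyndon_singleton (a : α) : IsLyndon [a] := by
  refine ⟨List.cons_ne_nil a [], fun u₁ u₂ h₁ h₂ h => ?_⟩
  rcases List.append_eq_singleton_iff.1 h.symm with ⟨h, -⟩ | ⟨-, h⟩
  · exact absurd h h₁
  · exact absurd h h₂

theorem exists_longest_isLyndon_prefix {u : List α} (hu : u ≠ []) :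
    ∃ v w : List α, u = v ++ w ∧ IsLyndon v ∧
      ∀ v' : List α, v' <+: u → IsLyndon v' → v'.length ≤ v.length := by
  have hfin : {v : List α | v <+: u ∧ IsLyndon v}.Finite :=
    u.inits.finite_toSet.subset fun v hv => (List.mem_inits v u).2 hv.1
  have hhead : [u.head hu] <+: u := ⟨u.tail, List.cons_head_tail hu⟩
  obtain ⟨v, ⟨⟨w, hvw⟩, hv⟩, hmax⟩ :=
    Set.exists_max_image _ List.length hfin ⟨_, hhead, isLyndon_singleton _⟩
  exact ⟨v, w, hvw.symm, hv, fun v' hv'u hv' => hmax v' ⟨hv'u, hv'⟩⟩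

theorem exists_shirshovDecomp {u : List α} (hu : 2 ≤ u.length) :
    ∃ v w : List α, ShirshovDecomp u v w := by
  have hu₀ : u ≠ [] := List.ne_nil_of_length_pos (by omega)
  have hfin : {w : List α | w <:+ u ∧ w ≠ u ∧ IsLyndon w}.Finite :=
    u.tails.finite_toSet.subset fun w hw => (List.mem_tails w u).2 hw.1
  have hlast : [u.getLast hu₀] <:+ u := ⟨u.dropLast, List.dropLast_append_getLast hu₀⟩
  have hlast_ne : [u.getLast hu₀] ≠ u := fun h => by
    have := congrArg List.length h
    simp only [List.length_singleton] at this
    omega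
  obtain ⟨w, ⟨⟨v, hvw⟩, hwu, hw⟩, hmax⟩ :=
    Set.exists_max_image _ List.length hfin ⟨_, hlast, hlast_ne, isLyndon_singleton _⟩
  refine ⟨v, w, hvw.symm, ?_, hw.1, hw, fun w' h₁ h₂ h₃ => hmax w' ⟨h₁, h₂, h₃⟩⟩
  rintro rfl
  exact hwu hvw

end LyndonFactor

section HigherRearrangement

theorem append_lt_append_of_length_eq {α : Type*} [LT α] {v v' : List α} (h : v < v')
    (hlen : v.length = v'.length) (w w' : List α) : v ++ w < v' ++ w' := by
  induction v generalizing v' with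
  | nil => exact absurd (List.length_eq_zero_iff.1 hlen.symm ▸ h) (List.not_lt_nil [])
  | cons a v ih =>
    obtain _ | ⟨b, v'⟩ := v'
    · exact absurd h (List.not_lt_nil _)
    · exact List.cons_lt_cons_iff.2 <| (List.cons_lt_cons_iff.1 h).imp_right
        fun ⟨hab, hv⟩ => ⟨hab, ih hv (Nat.succ.inj hlen)⟩

variable {α : Type*} [LinearOrder α]

/-- The rearrangements of a word `u` that are lexicographically larger than `u`. Brackets preserve
the multiset of letters, and fixing it, rather than just the length, leaves finitely many words
even over an infinite alphabet. -/
def higherRearrangements (u : List α) : Set (List α) :=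
  {w | u < w ∧ w.Perm u}

theorem higherRearrangements_finite (u : List α) : (higherRearrangements u).Finite :=
  u.permutations.finite_toSet.subset fun _ hw => List.mem_permutations.2 hw.2

theorem higherRearrangements_ssubset {u w : List α} (hw : w ∈ higherRearrangements u) :
    higherRearrangements w ⊂ higherRearrangements u :=
  ⟨fun _ hz => ⟨hw.1.trans hz.1, hz.2.trans hw.2⟩, fun h => lt_irrefl w (h hw).1⟩

theorem wellFounded_mem_higherRearrangements :
    WellFounded fun w u : List α => w ∈ higherRearrangements u :=
  Subrelation.wf (fun {_ u} hw => Set.ncard_lt_ncard (higherRearrangements_ssubset hw)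
    (higherRearrangements_finite u)) (measure fun u => (higherRearrangements u).ncard).wf

variable {v v' w w' : List α}

theorem le_of_mem_insert_higherRearrangements (h : w ∈ insert v (higherRearrangements v)) :
    v ≤ w :=
  h.elim (fun h => h.ge) fun h => h.1.le

theorem perm_of_mem_insert_higherRearrangements (h : w ∈ insert v (higherRearrangements v)) :
    w.Perm v :=
  h.elim (fun h => .of_eq h) And.right

theorem append_mem_higherRearrangements_of_left (hv : v' ∈ higherRearrangements v)
    (hw : w'.Perm w) : v' ++ w' ∈ higherRearrangements (v ++ w) :=
  ⟨append_lt_append_of_length_eq hv.1 hv.2.length_eq.symm w w', hv.2.append hw⟩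

theorem append_mem_higherRearrangements_of_right
    (hv : v' ∈ insert v (higherRearrangements v)) (hw : w' ∈ higherRearrangements w) :
    v' ++ w' ∈ higherRearrangements (v ++ w) := by
  obtain rfl | hv := hv
  · exact ⟨List.append_left_lt hw.1, hw.2.append_left v'⟩
  · exact append_mem_higherRearrangements_of_left hv hw.2

theorem append_swap_mem_higherRearrangements (h : v ++ w < w) (hv : v'.Perm v)
    (hw : w' ∈ insert w (higherRearrangements w)) :
    w' ++ v' ∈ higherRearrangements (v ++ w) :=
  ⟨(h.trans_le (le_of_mem_insert_higherRearrangements hw)).trans_le (not_lt.1 List.le_append_left),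
    ((perm_of_mem_insert_higherRearrangements hw).append hv).trans List.perm_append_comm⟩

end HigherRearrangement

section WordSpan

variable {k T N ι : Type*} [CommSemiring k] [Semiring T] [Algebra k T]
  [AddCommMonoid N] [Module k N] (V : ι → Submodule k T)

theorem Vword_append (v w : List ι) : Vword V (v ++ w) = Vword V v * Vword V w := by
  simp only [Vword, List.map_append, List.prod_append]

/-- The sum of the spaces `V^w` of `w`-vectors over the words `w` in a set `S`. -/
def wordSpan (S : Set (List ι)) : Submodule k T :=
  ⨆ w ∈ S, Vword V w

variable {V} {S S' S'' : Set (List ι)}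

theorem Vword_le_wordSpan {w : List ι} (hw : w ∈ S) : Vword V w ≤ wordSpan V S :=
  le_biSup (Vword V) hw

theorem map₂_wordSpan_le {B : T →ₗ[k] T →ₗ[k] N} {P : Submodule k N}
    (h : ∀ a ∈ S, ∀ b ∈ S', Submodule.map₂ B (Vword V a) (Vword V b) ≤ P) :
    Submodule.map₂ B (wordSpan V S) (wordSpan V S') ≤ P := by
  simp only [wordSpan, Submodule.map₂_iSup_left, Submodule.map₂_iSup_right, iSup_le_iff]
  exact fun b hb a ha => h a ha b hb

theorem mul_mem_wordSpan (h : ∀ a ∈ S, ∀ b ∈ S', a ++ b ∈ S'') {x y : T}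
    (hx : x ∈ wordSpan V S) (hy : y ∈ wordSpan V S') : x * y ∈ wordSpan V S'' := by
  have hle : Submodule.map₂ (LinearMap.mul k T) (wordSpan V S) (wordSpan V S') ≤
      wordSpan V S'' := map₂_wordSpan_le fun a ha b hb => by
    rw [← Submodule.mul_eq_map₂, ← Vword_append]
    exact Vword_le_wordSpan (h a ha b hb)
  exact hle (Submodule.apply_mem_map₂ _ hx hy)

end WordSpan

section LeadingTerm

variable {k T ι : Type*} [CommRing k] [Ring T] [Algebra k T] {V : ι → Submodule k T}

theorem mem_wordSpan_insert_of_sub_mem {S : Set (List ι)} {u : List ι} {x x' : T}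
    (hx : x ∈ Vword V u) (hx' : x - x' ∈ wordSpan V S) : x' ∈ wordSpan V (insert u S) := by
  have hle : wordSpan V S ≤ wordSpan V (insert u S) := biSup_mono fun _ => Set.mem_insert_of_mem u
  simpa only [sub_sub_cancel] using
    sub_mem (Vword_le_wordSpan (Set.mem_insert u S) hx) (hle hx')

theorem mul_sub_mul_mem_wordSpan_higherRearrangements [LinearOrder ι] {v w : List ι}
    {x x' y y' : T} (hx : x ∈ Vword V v) (hy : y ∈ Vword V w)
    (hx' : x - x' ∈ wordSpan V (higherRearrangements v))
    (hy' : y - y' ∈ wordSpan V (higherRearrangements w)) :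
    x * y - x' * y' ∈ wordSpan V (higherRearrangements (v ++ w)) := by
  have hleft : (x - x') * y ∈ wordSpan V (higherRearrangements (v ++ w)) :=
    mul_mem_wordSpan
      (fun _ ha _ hb => append_mem_higherRearrangements_of_left ha (.of_eq hb)) hx'
      (Vword_le_wordSpan (Set.mem_singleton w) hy)
  have hright : x' * (y - y') ∈ wordSpan V (higherRearrangements (v ++ w)) :=
    mul_mem_wordSpan (fun _ ha _ hb => append_mem_higherRearrangements_of_right ha hb)
      (mem_wordSpan_insert_of_sub_mem hx hx') hy'
  simpa only [sub_mul, mul_sub, sub_add_sub_cancel] using add_mem hleft hright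

end LeadingTerm

section Bracketing

variable {k T ι : Type*} [Field k] [Ring T] [Algebra k T] {V : ι → Submodule k T}
  {cinv : T ⊗[k] T →ₗ[k] T ⊗[k] T}

theorem BraidingCompat.map₂_mul'_comp_le (hc : BraidingCompat V cinv) (v w : List ι) :
    Submodule.map₂ (TensorProduct.curry (LinearMap.mul' k T ∘ₗ cinv)) (Vword V v) (Vword V w) ≤
      Vword V (w ++ v) := by
  refine Submodule.map₂_le.2 fun x hx y hy => ?_
  have hxy : x ⊗ₜ y ∈ LinearMap.range (mapIncl (Vword V v) (Vword V w)) :=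
    ⟨⟨x, hx⟩ ⊗ₜ ⟨y, hy⟩, rfl⟩
  rw [Vword_append, ← Submodule.mulMap_range, Submodule.mulMap_eq_mul'_comp_mapIncl,
    LinearMap.range_comp]
  exact Submodule.mem_map_of_mem (hc v w _ hxy)

variable [LinearOrder ι] {Br : List ι → T →ₗ[k] T}

theorem BraidingCompat.mul'_mem_wordSpan_higherRearrangements (hc : BraidingCompat V cinv)
    {v w : List ι} (hvw : v ++ w < w) {x x' y y' : T} (hx : x ∈ Vword V v) (hy : y ∈ Vword V w)
    (hx' : x - x' ∈ wordSpan V (higherRearrangements v))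
    (hy' : y - y' ∈ wordSpan V (higherRearrangements w)) :
    LinearMap.mul' k T (cinv (x' ⊗ₜ y')) ∈ wordSpan V (higherRearrangements (v ++ w)) := by
  have hle := map₂_wordSpan_le fun a ha b hb =>
    (hc.map₂_mul'_comp_le a b).trans <| Vword_le_wordSpan <|
      append_swap_mem_higherRearrangements hvw (perm_of_mem_insert_higherRearrangements ha) hb
  exact hle <| Submodule.apply_mem_map₂ _
    (mem_wordSpan_insert_of_sub_mem hx hx') (mem_wordSpan_insert_of_sub_mem hy hy')

theorem IsBracketing.exists_split (hBr : IsBracketing V cinv Br) {u : List ι}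
    (hu : 2 ≤ u.length) :
    ∃ v w : List ι, v ≠ [] ∧ w ≠ [] ∧ u = v ++ w ∧
      ((∀ x ∈ Vword V v, ∀ y ∈ Vword V w, Br u (x * y) = Br v x * Br w y) ∨
        (u < w ∧ ∀ x ∈ Vword V v, ∀ y ∈ Vword V w,
          Br u (x * y) = Br v x * Br w y - LinearMap.mul' k T (cinv (Br v x ⊗ₜ Br w y)))) := by
  obtain ⟨-, -, hlyndon, hmonotonic⟩ := hBr
  by_cases hL : IsLyndon u
  · obtain ⟨v, w, hvw⟩ := exists_shirshovDecomp hu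
    obtain ⟨huvw, hv₀, hw₀, -⟩ := id hvw
    exact ⟨v, w, hv₀, hw₀, huvw, .inr ⟨hL.2 v w hv₀ hw₀ huvw, hlyndon u v w hL hvw⟩⟩
  · obtain ⟨v, w, huvw, hv, hmax⟩ :=
      exists_longest_isLyndon_prefix (List.ne_nil_of_length_pos (by omega : 0 < u.length))
    have hw₀ : w ≠ [] := by
      rintro rfl
      exact hL (by rwa [huvw, List.append_nil])
    exact ⟨v, w, hv.1, hw₀, huvw, .inl (hmonotonic u v w huvw hv hw₀ hmax)⟩

theorem IsBracketing.apply_eq_self_of_length_lt_two (hBr : IsBracketing V cinv Br) {u : List ι}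
    (hu : u.length < 2) {x : T} (hx : x ∈ Vword V u) : Br u x = x := by
  obtain ⟨hnil, hletter, -⟩ := hBr
  obtain _ | ⟨a, _ | ⟨b, u⟩⟩ := u
  · exact hnil x hx
  · exact hletter a x (by simpa only [Vword, List.map_singleton, List.prod_singleton] using hx)
  · exact absurd hu (by simp)

theorem IsBracketing.sub_mem_wordSpan_higherRearrangements (hBr : IsBracketing V cinv Br)
    (hc : BraidingCompat V cinv) (u : List ι) {x : T} (hx : x ∈ Vword V u) :
    x - Br u x ∈ wordSpan V (higherRearrangements u) := by
  induction hn : u.length using Nat.strong_induction_on generalizing u x with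
  | _ n ih =>
    subst hn
    obtain hlen | hlen := Nat.lt_or_ge u.length 2
    · rw [hBr.apply_eq_self_of_length_lt_two hlen hx, sub_self]
      exact zero_mem _
    obtain ⟨v, w, hv₀, hw₀, rfl, hsplit⟩ := hBr.exists_split hlen
    have hv_lt : v.length < (v ++ w).length := by
      simpa using List.length_pos_of_ne_nil hw₀
    have hw_lt : w.length < (v ++ w).length := by
      simpa using List.length_pos_of_ne_nil hv₀
    suffices h : ∀ x ∈ Vword V v, ∀ y ∈ Vword V w,
        x * y - Br (v ++ w) (x * y) ∈ wordSpan V (higherRearrangements (v ++ w)) by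
      have hle : Vword V v * Vword V w ≤
          (wordSpan V (higherRearrangements (v ++ w))).comap (LinearMap.id - Br (v ++ w)) :=
        Submodule.mul_le.2 h
      rw [Vword_append] at hx
      exact hle hx
    intro x hx y hy
    have hx' := ih _ hv_lt v hx rfl
    have hy' := ih _ hw_lt w hy rfl
    have hmul := mul_sub_mul_mem_wordSpan_higherRearrangements hx hy hx' hy'
    obtain hprod | ⟨huw, hskew⟩ := hsplit
    · rwa [hprod x hx y hy]
    · rw [hskew x hx y hy, ← sub_add]
      exact add_mem hmul (hc.mul'_mem_wordSpan_higherRearrangements huw hx hy hx' hy')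

theorem sub_bracket_mem_higher_general (hc : BraidingCompat V cinv)
    (hBr : IsBracketing V cinv Br) (u : List ι) {x : T} (hx : x ∈ Vword V u) :
    x - Br u x ∈ ⨆ w ∈ higherRearrangements u, (Vword V w).map (Br w) :=
  sub_apply_mem_iSup_map_of_wellFounded wellFounded_mem_higherRearrangements
    (fun _ _ hw => (higherRearrangements_ssubset hw).subset)
    (fun u _ hx => hBr.sub_mem_wordSpan_higherRearrangements hc u hx) u hx

end Bracketing

/-- For any word `u` and any `u`-vector `x`, the difference `x − [x]` is a
linear combination of `w`-bracket-words with `w` a monotonic super-word (identified with the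
word `w` via the Chen–Fox–Lyndon factorization) satisfying `w > u` lexicographically. -/
theorem sub_bracket_mem_higher {k T ι : Type*} [Field k] [Ring T] [Algebra k T]
    [LinearOrder ι]
    (V : ι → Submodule k T) (cinv : T ⊗[k] T →ₗ[k] T ⊗[k] T)
    (hc : BraidingCompat V cinv)
    (Br : List ι → T →ₗ[k] T) (hBr : IsBracketing V cinv Br)
    (u : List ι) (x : T) (hx : x ∈ Vword V u) :
    x - Br u x ∈
      ⨆ w ∈ {w : List ι | u < w ∧ w.length = u.length}, (Vword V w).map (Br w) :=
  biSup_mono (f := fun w => (Vword V w).map (Br w)) (fun _ hw => ⟨hw.1, hw.2.length_eq⟩)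
    (sub_bracket_mem_higher_general hc hBr u hx)
end
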